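/- The 16 linear maps B_M : M_2(ℂ) → M_2(ℂ), B_M(ρ) := M ρ M†, for M ranging over the set {I, X, Y, Z, (I+iX)/√2, (I+iY)/√2, (I+iZ)/√2, (Y+Z)/√2, (Z+X)/√2, (X+Y)/√2, (I+X)/2, (I+Y)/2, (I+Z)/2, (Y+iZ)/2, (Z+iX)/2, (X+iY)/2}, are linearly independent over ℝ in the real vector space of ℂ-linear endomorphisms of M_2(ℂ). -/

import Mathlib

open Matrix Complex

/-- The Pauli matrix `X`. -/
def pauliX : Matrix (Fin 2) (Fin 2) ℂ := !![0, 1; 1, 0]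

/-- The Pauli matrix `Y`. -/
def pauliY : Matrix (Fin 2) (Fin 2) ℂ := !![0, -Complex.I; Complex.I, 0]

/-- The Pauli matrix `Z`. -/
def pauliZ : Matrix (Fin 2) (Fin 2) ℂ := !![1, 0; 0, -1]

/-- The 16 matrices defining the standard basis operations:
`I, X, Y, Z, (I+iX)/√2, (I+iY)/√2, (I+iZ)/√2, (Y+Z)/√2, (Z+X)/√2, (X+Y)/√2,
(I+X)/2, (I+Y)/2, (I+Z)/2, (Y+iZ)/2, (Z+iX)/2, (X+iY)/2`. -/
noncomputable def stdBasisMats : Fin 16 → Matrix (Fin 2) (Fin 2) ℂ :=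
  ![1, pauliX, pauliY, pauliZ,
    ((Real.sqrt 2 : ℂ))⁻¹ • (1 + Complex.I • pauliX),
    ((Real.sqrt 2 : ℂ))⁻¹ • (1 + Complex.I • pauliY),
    ((Real.sqrt 2 : ℂ))⁻¹ • (1 + Complex.I • pauliZ),
    ((Real.sqrt 2 : ℂ))⁻¹ • (pauliY + pauliZ),
    ((Real.sqrt 2 : ℂ))⁻¹ • (pauliZ + pauliX),
    ((Real.sqrt 2 : ℂ))⁻¹ • (pauliX + pauliY),
    (2 : ℂ)⁻¹ • (1 + pauliX),
    (2 : ℂ)⁻¹ • (1 + pauliY),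
    (2 : ℂ)⁻¹ • (1 + pauliZ),
    (2 : ℂ)⁻¹ • (pauliY + Complex.I • pauliZ),
    (2 : ℂ)⁻¹ • (pauliZ + Complex.I • pauliX),
    (2 : ℂ)⁻¹ • (pauliX + Complex.I • pauliY)]

/-- The `ℂ`-linear conjugation map `B_M : ρ ↦ M ρ M†`. -/
noncomputable def conjugationMap (M : Matrix (Fin 2) (Fin 2) ℂ) :
    Matrix (Fin 2) (Fin 2) ℂ →ₗ[ℂ] Matrix (Fin 2) (Fin 2) ℂ :=
  (LinearMap.mulRight ℂ Mᴴ).comp (LinearMap.mulLeft ℂ M)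

/-- Entries of `B_M` on the matrix units. -/
lemma conjugationMap_single_apply (M : Matrix (Fin 2) (Fin 2) ℂ) (i j k l : Fin 2) :
    conjugationMap M (Matrix.single j l 1) i k = M i j * star (M k l) := by
  simp [conjugationMap, Matrix.mul_apply, Matrix.single_apply, ite_and]

/-- Rescaling `M` by `s` rescales `B_M` by `s * star s`. -/
lemma conjugationMap_smul (s : ℂ) (M : Matrix (Fin 2) (Fin 2) ℂ) :
    conjugationMap (s • M) = (s * star s) • conjugationMap M := by
  ext
  simp [conjugationMap]
  ring

lemma inv_sqrt_two_mul_star_self :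
    ((Real.sqrt 2 : ℂ))⁻¹ * star ((Real.sqrt 2 : ℂ))⁻¹ = ((1 / 2 : ℝ) : ℂ) := by
  rw [← Complex.ofReal_inv, Complex.star_def, Complex.conj_ofReal, ← Complex.ofReal_mul,
    ← mul_inv, Real.mul_self_sqrt zero_le_two, one_div]

lemma inv_two_mul_star_self : (2 : ℂ)⁻¹ * star (2 : ℂ)⁻¹ = ((1 / 4 : ℝ) : ℂ) := by
  norm_num

/-- The 16 standard basis operations `B_M(ρ) = M ρ M†`, for `M` ranging over
`stdBasisMats`, are linearly independent over `ℝ` in the real vector space of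
`ℂ`-linear endomorphisms of `M_2(ℂ)`. -/
theorem stdBasis_linearIndependent :
    LinearIndependent ℝ (fun i : Fin 16 => conjugationMap (stdBasisMats i)) := by
  rw [Fintype.linearIndependent_iff]
  intro c hc
  have entry (i j k l : Fin 2) :
      (∑ m, c m • conjugationMap (stdBasisMats m)) (Matrix.single j l 1) i k = 0 := by
    rw [hc]; rfl
  simp only [Fin.sum_univ_succ, Fin.sum_univ_zero, stdBasisMats, Matrix.cons_val_zero,
    Matrix.cons_val_succ, conjugationMap_smul, inv_sqrt_two_mul_star_self, inv_two_mul_star_self,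
    LinearMap.add_apply, LinearMap.smul_apply, Matrix.add_apply, Matrix.smul_apply,
    conjugationMap_single_apply, LinearMap.zero_apply, Matrix.zero_apply] at entry
  have re (i j k l : Fin 2) := congrArg Complex.re (entry i j k l)
  have im (i j k l : Fin 2) := congrArg Complex.im (entry i j k l)
  have re0000 := re 0 0 0 0
  have re0001 := re 0 0 0 1
  have re0010 := re 0 0 1 0
  have re0011 := re 0 0 1 1
  have re0101 := re 0 1 0 1
  have re0110 := re 0 1 1 0
  have re0111 := re 0 1 1 1
  have re1010 := re 1 0 1 0
  have re1011 := re 1 0 1 1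
  have re1111 := re 1 1 1 1
  have im0001 := im 0 0 0 1
  have im0010 := im 0 0 1 0
  have im0011 := im 0 0 1 1
  have im0110 := im 0 1 1 0
  have im0111 := im 0 1 1 1
  have im1011 := im 1 0 1 1
  clear entry re im hc
  simp [pauliX, pauliY, pauliZ] at re0000 re0001 re0010 re0011 re0101
  simp [pauliX, pauliY, pauliZ] at re0110 re0111 re1010 re1011 re1111
  simp [pauliX, pauliY, pauliZ] at im0001 im0010 im0011 im0110 im0111 im1011
  have c5 : c 5 = 0 := by linarith only [re0001, re0010, re0111, re1011]
  have c8 : c 8 = 0 := by linarith only [re0001, re0010, re0111, re1011]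
  have c10 : c 10 = 0 := by linarith only [re0001, re0010, re0111, re1011]
  have c13 : c 13 = 0 := by linarith only [re0001, re0010, re0111, re1011]
  have c4 : c 4 = 0 := by linarith only [im0001, im0010, im0111, im1011]
  have c7 : c 7 = 0 := by linarith only [im0001, im0010, im0111, im1011]
  have c11 : c 11 = 0 := by linarith only [im0001, im0010, im0111, im1011]
  have c14 : c 14 = 0 := by linarith only [im0001, im0010, im0111, im1011]
  simp only [c4, c5, c7, c8, c10, c11, c13, c14, im0011, im0110, zero_mul, neg_zero, add_zero,
    zero_add] at re0000 re0011 re0101 re0110 re1010 re1111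
  have c12 : c 12 = 0 := by linarith only [re0000, re1111]
  have c15 : c 15 = 0 := by linarith only [re0101, re1010]
  have c0 : c 0 = 0 := by linarith only [re0011, re1111]
  have c3 : c 3 = 0 := by linarith only [re0011, re1111]
  have c1 : c 1 = 0 := by linarith only [re0110, re1010]
  have c2 : c 2 = 0 := by linarith only [re0110, re1010]
  intro m
  fin_cases m <;> assumption
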